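/- Let ε_1 = ε_2 = −1, ε_3 = ε_4 = 1, let ξ ∈ ℝ, and for smooth functions v : ℂ⁴ → ℂ define ∂̄_j v = ∂v/∂z̄_j + ε_j ξ z_j v. Then for every fixed index k ∈ {1,2,3,4} and every smooth compactly supported v : ℂ⁴ → ℂ, ∑_{j ≠ k} ∫_{ℂ⁴} |∂̄_j v|² e^{|z|²} dλ(z) ≥ 2 ∫_{ℂ⁴} |v|² e^{|z|²} dλ(z). -/

import Mathlib

open MeasureTheory Complex Finset

noncomputable section

/-- Wirtinger derivative `∂v/∂z̄_j = (1/2)(∂/∂x_j + i ∂/∂y_j) v` on `ℂⁿ`. -/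
def wbar {n : ℕ} (j : Fin n) (v : (Fin n → ℂ) → ℂ) (z : Fin n → ℂ) : ℂ :=
  (1 / 2 : ℂ) * (fderiv ℝ v z (Pi.single j 1) + Complex.I * fderiv ℝ v z (Pi.single j Complex.I))

/-- Wirtinger derivative `∂v/∂z_j = (1/2)(∂/∂x_j − i ∂/∂y_j) v` on `ℂⁿ`. -/
def whol {n : ℕ} (j : Fin n) (v : (Fin n → ℂ) → ℂ) (z : Fin n → ℂ) : ℂ :=
  (1 / 2 : ℂ) * (fderiv ℝ v z (Pi.single j 1) - Complex.I * fderiv ℝ v z (Pi.single j Complex.I))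

/-- The operator `∂̄_j v = ∂v/∂z̄_j + λ_j z_j v`. -/
def dbarOp {n : ℕ} (lam : Fin n → ℝ) (j : Fin n) (v : (Fin n → ℂ) → ℂ) (z : Fin n → ℂ) : ℂ :=
  wbar j v z + (lam j : ℂ) * z j * v z

/-- The operator `δ_j v = −∂v/∂z_j + λ_j z̄_j v − z̄_j v`. -/
def deltaOp {n : ℕ} (lam : Fin n → ℝ) (j : Fin n) (v : (Fin n → ℂ) → ℂ) (z : Fin n → ℂ) : ℂ :=
  - whol j v z + (lam j : ℂ) * (starRingEnd ℂ) (z j) * v z - (starRingEnd ℂ) (z j) * v z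

/-- The weight `e^{|z|²}`. -/
def wgt {n : ℕ} (z : Fin n → ℂ) : ℝ := Real.exp (∑ j, Complex.normSq (z j))

/-- The signs ε₁ = ε₂ = −1, ε₃ = ε₄ = 1. -/
def eps : Fin 4 → ℝ := ![-1, -1, 1, 1]

/-!
For the pairing `⟪u, v⟫ = ∫ ū v e^{|z|²}`, integration by parts makes `δ_j` the formal adjoint of
`∂̄_j`, and `[δ_j, ∂̄_j] = 1 - 2 λ_j`. Hence `‖∂̄_j v‖² = ‖δ_j v‖² + (1 - 2 λ_j) ‖v‖²`. When
`λ_j = ε_j ξ`, any three indices contain two with opposite signs `ε_j`, and for these two the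
constants `1 - 2 λ_j` add up to `2`.
-/

open scoped ComplexConjugate

section FDeriv

variable {E F : Type*} [NormedAddCommGroup E] [NormedSpace ℝ E] [NormedAddCommGroup F]
  [NormedSpace ℝ F] {f : E → F}

lemma fderiv_fderiv_apply (hf : ContDiff ℝ 2 f) (x a b : E) :
    fderiv ℝ (fun y => fderiv ℝ f y a) x b = fderiv ℝ (fderiv ℝ f) x b a := by
  have differentiable_fderiv : Differentiable ℝ (fderiv ℝ f) :=
    (hf.fderiv_right (m := 1) one_add_one_eq_two.le).differentiable one_ne_zero
  simp [fderiv_clm_apply (differentiable_fderiv x) (differentiableAt_const a)]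

lemma differentiable_fderiv_apply (hf : ContDiff ℝ 2 f) (a : E) :
    Differentiable ℝ (fun y => fderiv ℝ f y a) :=
  ((hf.fderiv_right (m := 1) one_add_one_eq_two.le).differentiable one_ne_zero).clm_apply
    (differentiable_const a)

variable [MeasurableSpace E] [BorelSpace E] {μ : Measure E}

lemma integrable_fderiv_apply [IsFiniteMeasureOnCompacts μ] (hf : ContDiff ℝ 1 f)
    (hfs : HasCompactSupport f) (e : E) :
    Integrable (fun x => fderiv ℝ f x e) μ :=
  ((hf.continuous_fderiv one_ne_zero).clm_apply continuous_const).integrable_of_hasCompactSupport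
    (hfs.fderiv_apply (𝕜 := ℝ) e)

lemma integral_fderiv_apply_eq_zero [FiniteDimensional ℝ E] [μ.IsAddHaarMeasure]
    (hf : ContDiff ℝ 1 f) (hfs : HasCompactSupport f) (e : E) :
    ∫ x, fderiv ℝ f x e ∂μ = 0 := by
  have parts := integral_smul_fderiv_eq_neg_fderiv_smul_of_integrable (𝕜 := ℝ) (μ := μ)
    (f := fun _ => (1 : ℝ)) (g := f) (v := e) (by simp)
    (by simpa using integrable_fderiv_apply hf hfs e)
    (by simpa using hf.continuous.integrable_of_hasCompactSupport hfs)
    (fun _ _ => differentiableAt_const _) (fun x _ => hf.differentiable one_ne_zero x)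
  simpa using parts

end FDeriv

section Wirtinger

variable {n : ℕ} {u v : (Fin n → ℂ) → ℂ} {z : Fin n → ℂ}

lemma wbar_sub (j : Fin n) (hu : DifferentiableAt ℝ u z) (hv : DifferentiableAt ℝ v z) :
    wbar j (fun y => u y - v y) z = wbar j u z - wbar j v z := by
  simp only [wbar, fderiv_fun_sub hu hv, sub_apply]
  ring

lemma wbar_mul (j : Fin n) (hu : DifferentiableAt ℝ u z) (hv : DifferentiableAt ℝ v z) :
    wbar j (fun y => u y * v y) z = u z * wbar j v z + wbar j u z * v z := by
  simp only [wbar, fderiv_fun_mul hu hv, add_apply, smul_apply, smul_eq_mul]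
  ring

lemma wbar_conj (j : Fin n) (v : (Fin n → ℂ) → ℂ) (z : Fin n → ℂ) :
    wbar j (fun y => conj (v y)) z = conj (whol j v z) := by
  have fderiv_conj (e : Fin n → ℂ) :
      fderiv ℝ (fun y => conj (v y)) z e = conj (fderiv ℝ v z e) :=
    DFunLike.congr_fun (conjCLE.comp_fderiv (f := v) (x := z)) e
  simp only [wbar, whol, fderiv_conj, map_mul, map_sub, map_div₀, map_one, map_ofNat, conj_I]
  ring

lemma whol_add (j : Fin n) (hu : DifferentiableAt ℝ u z) (hv : DifferentiableAt ℝ v z) :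
    whol j (fun y => u y + v y) z = whol j u z + whol j v z := by
  simp only [whol, fderiv_fun_add hu hv, add_apply]
  ring

lemma whol_mul (j : Fin n) (hu : DifferentiableAt ℝ u z) (hv : DifferentiableAt ℝ v z) :
    whol j (fun y => u y * v y) z = u z * whol j v z + whol j u z * v z := by
  simp only [whol, fderiv_fun_mul hu hv, add_apply, smul_apply, smul_eq_mul]
  ring

lemma whol_const_mul_coord (c : ℂ) (j : Fin n) (z : Fin n → ℂ) :
    whol j (fun y => c * y j) z = c := by
  have fderiv_coord (e : Fin n → ℂ) : fderiv ℝ (fun y : Fin n → ℂ => c * y j) z e = c * e j :=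
    DFunLike.congr_fun ((hasFDerivAt_apply (𝕜 := ℝ) j z).const_mul c).fderiv e
  simp only [whol, fderiv_coord, Pi.single_eq_same]
  linear_combination -(1 / 2 : ℂ) * c * I_sq

lemma wbar_const_mul_conj_coord (c : ℂ) (j : Fin n) (z : Fin n → ℂ) :
    wbar j (fun y => c * conj (y j)) z = c := by
  simpa [whol_const_mul_coord] using wbar_conj j (fun y => conj c * y j) z

lemma contDiff_wbar {m : WithTop ℕ∞} (j : Fin n) (hv : ContDiff ℝ (m + 1) v) :
    ContDiff ℝ m (wbar j v) := by
  have := hv.fderiv_right (m := m) le_rfl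
  unfold wbar
  fun_prop

lemma contDiff_whol {m : WithTop ℕ∞} (j : Fin n) (hv : ContDiff ℝ (m + 1) v) :
    ContDiff ℝ m (whol j v) := by
  have := hv.fderiv_right (m := m) le_rfl
  unfold whol
  fun_prop

lemma hasCompactSupport_whol (j : Fin n) (hvs : HasCompactSupport v) :
    HasCompactSupport (whol j v) :=
  .mul_left ((hvs.fderiv_apply (𝕜 := ℝ) _).sub (hvs.fderiv_apply (𝕜 := ℝ) _).mul_left)

lemma fderiv_wbar_apply (hv : ContDiff ℝ 2 v) (j : Fin n) (z e : Fin n → ℂ) :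
    fderiv ℝ (wbar j v) z e = (1 / 2 : ℂ) * (fderiv ℝ (fderiv ℝ v) z e (Pi.single j 1) +
      I * fderiv ℝ (fderiv ℝ v) z e (Pi.single j I)) := by
  have differentiable_dir (a : Fin n → ℂ) := differentiable_fderiv_apply hv a z
  unfold wbar
  rw [fderiv_const_mul (by fun_prop), fderiv_fun_add (by fun_prop) (by fun_prop),
    fderiv_const_mul (by fun_prop)]
  simp [fderiv_fderiv_apply hv, mul_add]

lemma fderiv_whol_apply (hv : ContDiff ℝ 2 v) (j : Fin n) (z e : Fin n → ℂ) :
    fderiv ℝ (whol j v) z e = (1 / 2 : ℂ) * (fderiv ℝ (fderiv ℝ v) z e (Pi.single j 1) -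
      I * fderiv ℝ (fderiv ℝ v) z e (Pi.single j I)) := by
  have differentiable_dir (a : Fin n → ℂ) := differentiable_fderiv_apply hv a z
  unfold whol
  rw [fderiv_const_mul (by fun_prop), fderiv_fun_sub (by fun_prop) (by fun_prop),
    fderiv_const_mul (by fun_prop)]
  simp [fderiv_fderiv_apply hv]

lemma whol_wbar_comm (hv : ContDiff ℝ 2 v) (j k : Fin n) (z : Fin n → ℂ) :
    whol j (wbar k v) z = wbar k (whol j v) z := by
  have symm : IsSymmSndFDerivAt ℝ v z := hv.contDiffAt.isSymmSndFDerivAt (by simp)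
  rw [whol, wbar]
  simp only [fderiv_wbar_apply hv, fderiv_whol_apply hv, symm.eq (Pi.single j _)]
  ring

lemma integrable_wbar (j : Fin n) (hv : ContDiff ℝ 1 v) (hvs : HasCompactSupport v) :
    Integrable (wbar j v) :=
  ((integrable_fderiv_apply hv hvs _).add
    ((integrable_fderiv_apply hv hvs _).const_mul I)).const_mul _

lemma integral_wbar_eq_zero (j : Fin n) (hv : ContDiff ℝ 1 v) (hvs : HasCompactSupport v) :
    ∫ z, wbar j v z = 0 := by
  simp only [wbar]
  rw [integral_const_mul, integral_add (integrable_fderiv_apply hv hvs _)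
    ((integrable_fderiv_apply hv hvs _).const_mul I), integral_const_mul,
    integral_fderiv_apply_eq_zero hv hvs, integral_fderiv_apply_eq_zero hv hvs, mul_zero,
    add_zero, mul_zero]

end Wirtinger

section Weight

variable {n : ℕ}

lemma wgt_nonneg (z : Fin n → ℂ) : 0 ≤ wgt z := (Real.exp_pos _).le

lemma contDiff_wgt {m : WithTop ℕ∞} : ContDiff ℝ m (wgt : (Fin n → ℂ) → ℝ) := by
  unfold wgt
  simp only [normSq_eq_norm_sq]
  exact (ContDiff.sum fun i _ => (contDiff_apply ℝ ℂ i).norm_sq ℝ).exp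

lemma fderiv_wgt_single (j : Fin n) (z : Fin n → ℂ) (c : ℂ) :
    fderiv ℝ wgt z (Pi.single j c) = wgt z * (2 * inner ℝ (z j) c) := by
  have hasFDerivAt_coord (i : Fin n) : HasFDerivAt (fun y : Fin n → ℂ => normSq (y i))
      (2 • (innerSL ℝ (z i)).comp (ContinuousLinearMap.proj i)) z := by
    simpa only [normSq_eq_norm_sq] using (hasFDerivAt_apply i z).norm_sq
  have hasFDerivAt_wgt := (HasFDerivAt.fun_sum (u := univ) fun i _ => hasFDerivAt_coord i).exp
  change fderiv ℝ (fun y => Real.exp (∑ i, normSq (y i))) z _ = Real.exp _ * _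
  rw [hasFDerivAt_wgt.fderiv]
  simp [-Complex.inner, Pi.single_apply, apply_ite]

lemma wbar_wgt (j : Fin n) (z : Fin n → ℂ) : wbar j (fun y => (wgt y : ℂ)) z = z j * wgt z := by
  have fderiv_ofReal (e : Fin n → ℂ) :
      fderiv ℝ (fun y => (wgt y : ℂ)) z e = (fderiv ℝ wgt z e : ℝ) :=
    DFunLike.congr_fun (ofRealCLM.hasFDerivAt.comp z
      (contDiff_wgt.differentiable one_ne_zero z).hasFDerivAt).fderiv e
  have inner_one : inner ℝ (z j) 1 = (z j).re := by simp
  have inner_I : inner ℝ (z j) I = (z j).im := by simp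
  simp only [wbar, fderiv_ofReal, fderiv_wgt_single, inner_one, inner_I, ofReal_mul, ofReal_ofNat]
  linear_combination (wgt z : ℂ) * re_add_im (z j)

end Weight

section TwistedOperators

variable {n : ℕ} (lam : Fin n → ℝ) (j : Fin n) {v : (Fin n → ℂ) → ℂ}

lemma deltaOp_eq_sub (v : (Fin n → ℂ) → ℂ) :
    deltaOp lam j v = fun z => ((lam j - 1 : ℝ) : ℂ) * conj (z j) * v z - whol j v z := by
  ext z
  simp only [deltaOp, ofReal_sub, ofReal_one]
  ring

lemma contDiff_dbarOp {m : WithTop ℕ∞} (hv : ContDiff ℝ (m + 1) v) :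
    ContDiff ℝ m (dbarOp lam j v) := by
  have := contDiff_wbar j hv
  have := hv.of_le le_self_add
  unfold dbarOp
  fun_prop

lemma contDiff_deltaOp {m : WithTop ℕ∞} (hv : ContDiff ℝ (m + 1) v) :
    ContDiff ℝ m (deltaOp lam j v) := by
  have := contDiff_whol j hv
  have := hv.of_le le_self_add
  have : ContDiff ℝ m fun z : Fin n → ℂ => conj (z j) :=
    conjCLE.contDiff.comp (contDiff_apply ℝ ℂ j)
  rw [deltaOp_eq_sub]
  fun_prop

lemma hasCompactSupport_deltaOp (hvs : HasCompactSupport v) :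
    HasCompactSupport (deltaOp lam j v) := by
  rw [deltaOp_eq_sub]
  exact hvs.mul_left.sub (hasCompactSupport_whol j hvs)

lemma deltaOp_dbarOp_eq_add (hv : ContDiff ℝ 2 v) (z : Fin n → ℂ) :
    deltaOp lam j (dbarOp lam j v) z =
      dbarOp lam j (deltaOp lam j v) z + ((1 - 2 * lam j : ℝ) : ℂ) * v z := by
  have differentiable_v : DifferentiableAt ℝ v z := hv.differentiable two_ne_zero z
  have differentiable_coord : DifferentiableAt ℝ (fun y : Fin n → ℂ => (lam j : ℂ) * y j) z := by
    fun_prop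
  have differentiable_conj_coord :
      DifferentiableAt ℝ (fun y : Fin n → ℂ => ((lam j - 1 : ℝ) : ℂ) * conj (y j)) z :=
    (conjCLE.differentiableAt.comp z (differentiableAt_apply j z)).const_mul _
  have whol_dbarOp : whol j (dbarOp lam j v) z =
      whol j (wbar j v) z + (lam j * z j * whol j v z + lam j * v z) := by
    unfold dbarOp
    rw [whol_add j ((contDiff_wbar j hv).differentiable one_ne_zero z)
      (differentiable_coord.fun_mul differentiable_v),
      whol_mul j differentiable_coord differentiable_v, whol_const_mul_coord]
  have wbar_deltaOp : wbar j (deltaOp lam j v) z =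
      ((lam j - 1 : ℝ) : ℂ) * conj (z j) * wbar j v z + ((lam j - 1 : ℝ) : ℂ) * v z -
        wbar j (whol j v) z := by
    rw [deltaOp_eq_sub, wbar_sub j (differentiable_conj_coord.fun_mul differentiable_v)
      ((contDiff_whol j hv).differentiable one_ne_zero z),
      wbar_mul j differentiable_conj_coord differentiable_v, wbar_const_mul_conj_coord]
  rw [deltaOp, whol_dbarOp, whol_wbar_comm hv, dbarOp, dbarOp, wbar_deltaOp, deltaOp]
  push_cast
  ring

end TwistedOperators

section WeightedInner

variable {n : ℕ} {u v : (Fin n → ℂ) → ℂ}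

/-- The Hermitian pairing `⟪u, v⟫ = ∫ ū v e^{|z|²}` of `L²(ℂⁿ, e^{|z|²})`, conjugate-linear in its
first argument like Mathlib's `inner`. -/
def weightedInner (u v : (Fin n → ℂ) → ℂ) : ℂ := ∫ z, conj (u z) * v z * wgt z

lemma integrable_conj_mul_mul_wgt (hu : Continuous u) (hv : Continuous v)
    (hvs : HasCompactSupport v) : Integrable fun z => conj (u z) * v z * wgt z := by
  have := (contDiff_wgt (n := n) (m := 0)).continuous
  exact Continuous.integrable_of_hasCompactSupport (by fun_prop) hvs.mul_left.mul_right

lemma weightedInner_add_left {u₁ u₂ : (Fin n → ℂ) → ℂ} (hu₁ : Continuous u₁)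
    (hu₂ : Continuous u₂) (hv : Continuous v) (hvs : HasCompactSupport v) :
    weightedInner (fun z => u₁ z + u₂ z) v = weightedInner u₁ v + weightedInner u₂ v := by
  simp only [weightedInner, map_add, add_mul]
  exact integral_add (integrable_conj_mul_mul_wgt hu₁ hv hvs)
    (integrable_conj_mul_mul_wgt hu₂ hv hvs)

lemma weightedInner_const_mul_left (c : ℂ) (u v : (Fin n → ℂ) → ℂ) :
    weightedInner (fun z => c * u z) v = conj c * weightedInner u v := by
  simp only [weightedInner, map_mul, mul_assoc, integral_const_mul]

lemma conj_weightedInner (u v : (Fin n → ℂ) → ℂ) :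
    conj (weightedInner u v) = weightedInner v u := by
  simp [weightedInner, ← integral_conj, mul_comm]

lemma weightedInner_self (v : (Fin n → ℂ) → ℂ) :
    weightedInner v v = (∫ z, ‖v z‖ ^ 2 * wgt z : ℝ) := by
  rw [← integral_complex_ofReal]
  simp [weightedInner, conj_mul']

lemma weightedInner_dbarOp_right (lam : Fin n → ℝ) (j : Fin n) (hu : ContDiff ℝ 1 u)
    (hv : ContDiff ℝ 1 v) (hvs : HasCompactSupport v) :
    weightedInner u (dbarOp lam j v) = weightedInner (deltaOp lam j u) v := by
  have contDiff_conj : ContDiff ℝ 1 fun z => conj (u z) := conjCLE.contDiff.comp hu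
  have contDiff_weight : ContDiff ℝ 1 fun z : Fin n → ℂ => (wgt z : ℂ) :=
    ofRealCLM.contDiff.comp contDiff_wgt
  have contDiff_product := (contDiff_conj.mul hv).mul contDiff_weight
  have support_product : HasCompactSupport fun z => conj (u z) * v z * wgt z :=
    hvs.mul_left.mul_right
  have divergence (z : Fin n → ℂ) : conj (u z) * dbarOp lam j v z * wgt z =
      conj (deltaOp lam j u z) * v z * wgt z +
        wbar j (fun y => conj (u y) * v y * wgt y) z := by
    have du := contDiff_conj.differentiable one_ne_zero z
    have dv := hv.differentiable one_ne_zero z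
    rw [wbar_mul j (du.fun_mul dv) (contDiff_weight.differentiable one_ne_zero z), wbar_mul j du dv,
      wbar_conj, wbar_wgt, deltaOp_eq_sub]
    simp only [dbarOp, map_sub, map_mul, conj_conj, conj_ofReal, ofReal_sub, ofReal_one, map_one]
    ring
  simp only [weightedInner, divergence]
  rw [integral_add (integrable_conj_mul_mul_wgt (contDiff_deltaOp (m := 0) lam j hu).continuous
    hv.continuous hvs) (integrable_wbar j contDiff_product support_product),
    integral_wbar_eq_zero j contDiff_product support_product, add_zero]

lemma weightedInner_dbarOp_self (lam : Fin n → ℝ) (j : Fin n) (hv : ContDiff ℝ 2 v)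
    (hvs : HasCompactSupport v) :
    weightedInner (dbarOp lam j v) (dbarOp lam j v) =
      weightedInner (deltaOp lam j v) (deltaOp lam j v) +
        ((1 - 2 * lam j : ℝ) : ℂ) * weightedInner v v := by
  have hv₁ : ContDiff ℝ 1 v := hv.of_le one_le_two
  have contDiff_delta := contDiff_deltaOp (m := 1) lam j hv
  calc weightedInner (dbarOp lam j v) (dbarOp lam j v)
      = weightedInner (deltaOp lam j (dbarOp lam j v)) v :=
        weightedInner_dbarOp_right lam j (contDiff_dbarOp lam j hv) hv₁ hvs
    _ = weightedInner (dbarOp lam j (deltaOp lam j v)) v +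
          ((1 - 2 * lam j : ℝ) : ℂ) * weightedInner v v := by
        rw [funext (deltaOp_dbarOp_eq_add lam j hv),
          weightedInner_add_left (contDiff_dbarOp (m := 0) lam j contDiff_delta).continuous
            (hv.continuous.const_mul _) hv.continuous hvs,
          weightedInner_const_mul_left, conj_ofReal]
    _ = conj (weightedInner v (dbarOp lam j (deltaOp lam j v))) +
          ((1 - 2 * lam j : ℝ) : ℂ) * weightedInner v v := by rw [conj_weightedInner]
    _ = weightedInner (deltaOp lam j v) (deltaOp lam j v) +
          ((1 - 2 * lam j : ℝ) : ℂ) * weightedInner v v := by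
        rw [weightedInner_dbarOp_right lam j hv₁ contDiff_delta
          (hasCompactSupport_deltaOp lam j hvs), conj_weightedInner]

lemma integral_norm_sq_mul_wgt_nonneg (v : (Fin n → ℂ) → ℂ) : 0 ≤ ∫ z, ‖v z‖ ^ 2 * wgt z :=
  integral_nonneg fun z => mul_nonneg (sq_nonneg _) (wgt_nonneg z)

lemma integral_norm_sq_dbarOp (lam : Fin n → ℝ) (j : Fin n) (hv : ContDiff ℝ 2 v)
    (hvs : HasCompactSupport v) :
    ∫ z, ‖dbarOp lam j v z‖ ^ 2 * wgt z =
      (∫ z, ‖deltaOp lam j v z‖ ^ 2 * wgt z) + (1 - 2 * lam j) * ∫ z, ‖v z‖ ^ 2 * wgt z := by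
  have identity := weightedInner_dbarOp_self lam j hv hvs
  simp only [weightedInner_self] at identity
  exact_mod_cast identity

lemma mul_integral_norm_sq_le_integral_norm_sq_dbarOp (lam : Fin n → ℝ) (j : Fin n)
    (hv : ContDiff ℝ 2 v) (hvs : HasCompactSupport v) :
    (1 - 2 * lam j) * ∫ z, ‖v z‖ ^ 2 * wgt z ≤ ∫ z, ‖dbarOp lam j v z‖ ^ 2 * wgt z := by
  rw [integral_norm_sq_dbarOp lam j hv hvs]
  exact le_add_of_nonneg_left (integral_norm_sq_mul_wgt_nonneg _)

theorem basic_estimate_off_k_general (lam : Fin n → ℝ) {s : Finset (Fin n)} {i j : Fin n}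
    (hi : i ∈ s) (hj : j ∈ s) (hij : i ≠ j) (hlam : lam i + lam j ≤ 0)
    (hv : ContDiff ℝ 2 v) (hvs : HasCompactSupport v) :
    2 * ∫ z, ‖v z‖ ^ 2 * wgt z ≤ ∑ l ∈ s, ∫ z, ‖dbarOp lam l v z‖ ^ 2 * wgt z := by
  calc 2 * ∫ z, ‖v z‖ ^ 2 * wgt z
      ≤ (1 - 2 * lam i) * (∫ z, ‖v z‖ ^ 2 * wgt z) +
          (1 - 2 * lam j) * ∫ z, ‖v z‖ ^ 2 * wgt z := by
        rw [← add_mul]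
        exact mul_le_mul_of_nonneg_right (by linarith) (integral_norm_sq_mul_wgt_nonneg v)
    _ ≤ (∫ z, ‖dbarOp lam i v z‖ ^ 2 * wgt z) + ∫ z, ‖dbarOp lam j v z‖ ^ 2 * wgt z :=
        add_le_add (mul_integral_norm_sq_le_integral_norm_sq_dbarOp lam i hv hvs)
          (mul_integral_norm_sq_le_integral_norm_sq_dbarOp lam j hv hvs)
    _ ≤ ∑ l ∈ s, ∫ z, ‖dbarOp lam l v z‖ ^ 2 * wgt z :=
        add_le_sum (fun l _ => integral_norm_sq_mul_wgt_nonneg (dbarOp lam l v)) hi hj hij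

end WeightedInner

lemma exists_eps_add_eps_eq_zero_off (k : Fin 4) :
    ∃ i ∈ univ.erase k, ∃ j ∈ univ.erase k, i ≠ j ∧ eps i + eps j = 0 := by
  have eps_one_add_two : eps 1 + eps 2 = 0 := by simp [eps]
  have eps_zero_add_three : eps 0 + eps 3 = 0 := by simp [eps]
  by_cases hk : k = 1 ∨ k = 2
  · exact ⟨0, by grind, 3, by grind, by decide, eps_zero_add_three⟩
  · exact ⟨1, by grind, 2, by grind, by decide, eps_one_add_two⟩

theorem basic_estimate_off_k (ξ : ℝ) (k : Fin 4)
    (v : (Fin 4 → ℂ) → ℂ) (hv : ContDiff ℝ (⊤ : ℕ∞) v) (hvcs : HasCompactSupport v) :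
    2 * ∫ z : Fin 4 → ℂ, ‖v z‖ ^ 2 * wgt z
      ≤ ∑ j ∈ Finset.univ.erase k,
          ∫ z : Fin 4 → ℂ, ‖dbarOp (fun i => eps i * ξ) j v z‖ ^ 2 * wgt z := by
  obtain ⟨i, hi, j, hj, hij, heps⟩ := exists_eps_add_eps_eq_zero_off k
  exact basic_estimate_off_k_general _ hi hj hij (by rw [← add_mul, heps, zero_mul])
    (mod_cast contDiff_infty.1 hv 2) hvcs
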